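/- Let $k \geq 3$ and $\varepsilon \in (0, 1/8)$. Suppose $s, \alpha_1,\dots,\alpha_k \in \mathbb{R}$ satisfy $|\alpha_i| \leq \frac{1}{2(k-1)}$ for all $i$ and $s \geq 1 - \frac1k + \frac{\varepsilon}{k} - \frac1k\sum_{i=1}^k \alpha_i$. Then for nonzero integers $a_1,\dots,a_k$, the series $\sum_{a_1 n_1 + \cdots + a_k n_k = 0} \frac{d(n_1)\cdots d(n_k)}{n_1^{s+\alpha_1}\cdots n_k^{s+\alpha_k}}$ (over positive integers $n_i$) converges, and is bounded by $C_\varepsilon (Ak/\varepsilon)^{4k}$ for an absolute constant $A$ and a constant $C_\varepsilon$ depending only on $\varepsilon$. -/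

import Mathlib

open Finset

/-- Partial sums of zeta. -/
lemma aux_zeta (η : ℝ) (hη : 0 < η) (N : ℕ) :
    ∑ a ∈ Icc 1 N, (1 : ℝ) / (a : ℝ) ^ (1 + η) ≤ 1 + 1 / η := by
  have key : ∀ N : ℕ, ∑ a ∈ Icc 1 (N + 1), (1 : ℝ) / (a : ℝ) ^ (1 + η) ≤
      1 + 1 / η - ((N + 1 : ℕ) : ℝ) ^ (-η) / η := by
    intro N
    induction N with
    | zero => simp
    | succ N ih =>
      rw [Finset.sum_Icc_succ_top (by omega)]
      have hx : (0 : ℝ) < ((N + 1 : ℕ) : ℝ) := by positivity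
      have hy : (0 : ℝ) < ((N + 1 + 1 : ℕ) : ℝ) := by positivity
      have hxy : ((N + 1 + 1 : ℕ) : ℝ) = ((N + 1 : ℕ) : ℝ) + 1 := by push_cast; ring
      set x : ℝ := ((N + 1 : ℕ) : ℝ)
      set y : ℝ := ((N + 1 + 1 : ℕ) : ℝ)
      have hlog : 1 / y ≤ Real.log y - Real.log x := by
        have h1 := Real.log_le_sub_one_of_pos (show 0 < x / y by positivity)
        rw [Real.log_div hx.ne' hy.ne'] at h1
        have : x / y - 1 = - (1 / y) := by rw [hxy]; field_simp; ring
        linarith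
      have hb : 0 < y ^ (-η) := Real.rpow_pos_of_pos hy _
      have ha : x ^ (-η) = y ^ (-η) * Real.exp (η * (Real.log y - Real.log x)) := by
        rw [Real.rpow_def_of_pos hx, Real.rpow_def_of_pos hy, ← Real.exp_add]
        congr 1; ring
      have hexp := Real.add_one_le_exp (η * (Real.log y - Real.log x))
      have h2 : y ^ (-η) * (1 + η * (1 / y)) ≤ x ^ (-η) := by
        rw [ha]
        apply mul_le_mul_of_nonneg_left _ hb.le
        have := mul_le_mul_of_nonneg_left hlog hη.le
        linarith
      have h3 : 1 / y ^ (1 + η) = y ^ (-η) * (1 / y) := by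
        rw [Real.rpow_add hy, Real.rpow_one, Real.rpow_neg hy.le]
        field_simp
      rw [h3]
      have h4 : y ^ (-η) * (1 / y) ≤ x ^ (-η) / η - y ^ (-η) / η := by
        rw [← sub_div, le_div_iff₀ hη]
        linarith
      linarith
  rcases N with _ | N
  · simp; positivity
  · have := key N
    have h : 0 ≤ ((N + 1 : ℕ) : ℝ) ^ (-η) / η := by positivity
    linarith

lemma aux_div_sum (η : ℝ) (hη : 0 < η) (N : ℕ) :
    ∑ n ∈ Icc 1 N, (n.divisors.card : ℝ) / (n : ℝ) ^ (1 + η) ≤ (1 + 1 / η) ^ 2 := by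
  have h1 : ∑ n ∈ Icc 1 N, (n.divisors.card : ℝ) / (n : ℝ) ^ (1 + η) ≤
      ∑ p ∈ Icc 1 N ×ˢ Icc 1 N, (1 / (p.1 : ℝ) ^ (1 + η)) * (1 / (p.2 : ℝ) ^ (1 + η)) := by
    refine le_trans ?_ (Finset.sum_fiberwise_le_sum_of_sum_fiber_nonneg
      (t := Icc 1 N) (g := fun p : ℕ × ℕ => p.1 * p.2) ?_)
    · apply Finset.sum_le_sum
      intro n hn
      rw [Finset.mem_Icc] at hn
      have hsub : n.divisorsAntidiagonal ⊆
          (Icc 1 N ×ˢ Icc 1 N).filter (fun p : ℕ × ℕ => p.1 * p.2 = n) := by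
        intro p hp
        rw [Nat.mem_divisorsAntidiagonal] at hp
        have hp1 : 0 < p.1 := Nat.pos_of_ne_zero (by rintro h; simp [h] at hp; omega)
        have hp2 : 0 < p.2 := Nat.pos_of_ne_zero (by rintro h; simp [h] at hp; omega)
        simp only [Finset.mem_filter, Finset.mem_product, Finset.mem_Icc]
        refine ⟨⟨⟨hp1, ?_⟩, hp2, ?_⟩, hp.1⟩ <;> nlinarith [hp.1, hn.2]
      refine le_trans ?_ (Finset.sum_le_sum_of_subset_of_nonneg hsub ?_)
      · have : ∀ p ∈ n.divisorsAntidiagonal,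
            (1 / (p.1 : ℝ) ^ (1 + η)) * (1 / (p.2 : ℝ) ^ (1 + η)) = 1 / (n : ℝ) ^ (1 + η) := by
          intro p hp
          rw [Nat.mem_divisorsAntidiagonal] at hp
          rw [← hp.1]
          push_cast
          rw [Real.mul_rpow (by positivity) (by positivity)]
          rw [one_div_mul_one_div]
        rw [Finset.sum_congr rfl this, Finset.sum_const, nsmul_eq_mul,
          ← Nat.map_div_right_divisors, Finset.card_map]
        rw [mul_one_div]
      · intros; positivity
    · intros; apply Finset.sum_nonneg; intros; positivity
  refine h1.trans ?_
  rw [Finset.sum_product]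
  dsimp only
  rw [← Finset.sum_mul_sum, sq]
  have := aux_zeta η hη N
  have h0 : 0 ≤ ∑ a ∈ Icc 1 N, (1 : ℝ) / (a : ℝ) ^ (1 + η) :=
    Finset.sum_nonneg (by intros; positivity)
  gcongr

lemma aux_div_bound (δ : ℝ) (hδ : 0 < δ) : ∃ C : ℝ, 0 < C ∧ ∀ n : ℕ, 0 < n →
    (n.divisors.card : ℝ) ≤ C * (n : ℝ) ^ δ := by
  set B : ℝ := 1 + 1 / (δ * Real.log 2) with hB
  have hl2 : 0 < Real.log 2 := Real.log_pos (by norm_num)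
  have hB1 : 1 ≤ B := by rw [hB]; have : 0 < 1 / (δ * Real.log 2) := by positivity
                         linarith
  obtain ⟨M, hM⟩ := exists_nat_ge ((2 : ℝ) ^ (1 / δ))
  refine ⟨B ^ M, by positivity, ?_⟩
  intro n hn
  rw [Nat.card_divisors hn.ne']
  have hfac : (n : ℝ) ^ δ = ∏ p ∈ n.primeFactors, ((p : ℝ) ^ δ) ^ (n.factorization p) := by
    conv_lhs => rw [← Nat.prod_factorization_pow_eq_self hn.ne']
    rw [Finsupp.prod, Nat.support_factorization]
    push_cast
    rw [← Real.finsetProd_rpow _ _ (by intros; positivity)]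
    apply Finset.prod_congr rfl
    intro p hp
    rw [← Real.rpow_natCast, ← Real.rpow_mul (by positivity), ← Real.rpow_natCast,
      ← Real.rpow_mul (by positivity), mul_comm]
  have hpt : ∀ p ∈ n.primeFactors, ((n.factorization p + 1 : ℕ) : ℝ) ≤
      (if p < M then B else 1) * ((p : ℝ) ^ δ) ^ (n.factorization p) := by
    intro p hp
    have hp2 : (2 : ℝ) ≤ p := by exact_mod_cast (Nat.prime_of_mem_primeFactors hp).two_le
    set e := n.factorization p
    split_ifs with h
    · have h1 : 1 + δ * Real.log 2 * e ≤ ((p : ℝ) ^ δ) ^ e := by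
        calc 1 + δ * Real.log 2 * e ≤ Real.exp (δ * Real.log 2 * e) := by
              have := Real.add_one_le_exp (δ * Real.log 2 * e); linarith
          _ = ((2 : ℝ) ^ δ) ^ e := by
              rw [Real.rpow_def_of_pos (by norm_num), ← Real.exp_nat_mul]; congr 1; ring
          _ ≤ _ := by gcongr
      refine le_trans ?_ (mul_le_mul_of_nonneg_left h1 (by linarith))
      have hpos : 0 < δ * Real.log 2 := by positivity
      have : B * (1 + δ * Real.log 2 * e) = 1 + e + (1 / (δ * Real.log 2) + δ * Real.log 2 * e) := by
        rw [hB]; field_simp; ring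
      rw [this]; push_cast
      have : 0 ≤ (1 / (δ * Real.log 2) + δ * Real.log 2 * e) := by positivity
      linarith
    · rw [one_mul]
      have h2 : (2 : ℝ) ≤ (p : ℝ) ^ δ := by
        have hMp : (M : ℝ) ≤ p := by exact_mod_cast not_lt.mp h
        calc (2 : ℝ) = ((2 : ℝ) ^ (1 / δ)) ^ δ := by
              rw [← Real.rpow_mul (by norm_num), one_div_mul_cancel hδ.ne', Real.rpow_one]
          _ ≤ _ := by
              apply Real.rpow_le_rpow (by positivity) (hM.trans hMp) hδ.le
      calc ((e + 1 : ℕ) : ℝ) ≤ (2 : ℝ) ^ e := by exact_mod_cast Nat.lt_two_pow_self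
        _ ≤ _ := by gcongr
  push_cast
  rw [hfac]
  calc _ ≤ ∏ p ∈ n.primeFactors, ((if p < M then B else 1) * ((p : ℝ) ^ δ) ^ (n.factorization p)) := by
        apply Finset.prod_le_prod
        · intros; positivity
        · intro p hp; have := hpt p hp; push_cast at this; exact this
    _ = (∏ p ∈ n.primeFactors, (if p < M then B else 1)) * _ := Finset.prod_mul_distrib
    _ ≤ _ := by
        apply mul_le_mul_of_nonneg_right _ (Finset.prod_nonneg (by intros; positivity))
        rw [Finset.prod_ite, Finset.prod_const, Finset.prod_const_one, mul_one]
        apply pow_le_pow_right₀ hB1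
        calc _ ≤ (Finset.range M).card := by
              apply Finset.card_le_card; intro p; simp
          _ = M := by simp

lemma aux_pos (k : ℕ) (hk : 3 ≤ k) (ε : ℝ) (h0 : 0 < ε) (h1 : ε < 1 / 8) (α : Fin k → ℝ)
    (hα : ∀ i, |α i| ≤ 1 / (2 * ((k : ℝ) - 1))) (s : ℝ)
    (hs : s = 1 - 1 / (k : ℝ) + ε / k - (∑ i, α i) / k) :
    ∑ i, max (s + α i - 1) 0 ≤ ε / 2 := by
  have hk3 : (3 : ℝ) ≤ k := by exact_mod_cast hk
  set S : Finset (Fin k) := univ.filter (fun i => 0 < s + α i - 1) with hS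
  have hsum : ∑ i, max (s + α i - 1) 0 = ∑ i ∈ S, (s + α i - 1) := by
    rw [hS, Finset.sum_filter]
    apply Finset.sum_congr rfl
    intro i _
    split_ifs with h
    · exact max_eq_left h.le
    · exact max_eq_right (not_lt.mp h)
  rw [hsum, Finset.sum_sub_distrib, Finset.sum_add_distrib]
  simp only [Finset.sum_const, nsmul_eq_mul, mul_one]
  set m : ℝ := (S.card : ℝ) with hm
  set W : ℝ := 1 / (2 * ((k : ℝ) - 1)) with hW
  have hc : ((Sᶜ).card : ℝ) = k - m := by
    rw [Finset.card_compl, Nat.cast_sub (Finset.card_le_univ S)]; simp [hm]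
  have hmk : m ≤ k := by
    have := Finset.card_le_univ S
    rw [Fintype.card_fin] at this; rw [hm]; exact_mod_cast this
  have hsplit : ∑ i, α i = ∑ i ∈ S, α i + ∑ i ∈ Sᶜ, α i := (Finset.sum_add_sum_compl S α).symm
  have hP : ∑ i ∈ S, α i ≤ m * W := by
    have := Finset.sum_le_card_nsmul S α W (fun i _ => (abs_le.mp (hα i)).2)
    simpa [nsmul_eq_mul] using this
  have hQ : -((k - m) * W) ≤ ∑ i ∈ Sᶜ, α i := by
    have := Finset.card_nsmul_le_sum Sᶜ α (-W) (fun i _ => (abs_le.mp (hα i)).1)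
    rw [nsmul_eq_mul, hc] at this
    linarith
  set P := ∑ i ∈ S, α i
  set Q := ∑ i ∈ Sᶜ, α i
  have hkW : W * (k - 1) = 1 / 2 := by
    have hk1 : (k : ℝ) - 1 ≠ 0 := by linarith
    rw [hW, one_div, mul_inv, mul_assoc, inv_mul_cancel₀ hk1]; norm_num
  have hm0 : 0 ≤ m := Nat.cast_nonneg _
  have hsk : s * k = k - 1 + ε - (P + Q) := by
    have hk0 : (k : ℝ) ≠ 0 := by linarith
    rw [hs, hsplit]
    clear_value P Q
    have e : ∀ x : ℝ, x / (k : ℝ) * k = x := fun x => div_mul_cancel₀ x hk0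
    rw [sub_mul, add_mul, sub_mul, e, e, e, one_mul]
  -- multiply by k
  have hk0 : (0 : ℝ) < k := by linarith
  have e1 : (m * s + P - m) * k = m * (ε - 1) + (k - m) * P - m * Q := by
    have : (m * s + P - m) * k = m * (s * k) + P * k - m * k := by ring
    rw [this, hsk]; ring
  have e2 : (m * s + P - m) * k ≤ m * (ε - 1) + 2 * m * (k - m) * W := by
    rw [e1]
    nlinarith [mul_le_mul_of_nonneg_left hP (sub_nonneg.mpr hmk), mul_le_mul_of_nonneg_left hQ hm0]
  have e3 : (m * s + P - m) * k * (k - 1) ≤ m * (ε * (k - 1) - (m - 1)) := by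
    calc _ ≤ (m * (ε - 1) + 2 * m * (k - m) * W) * (k - 1) :=
          mul_le_mul_of_nonneg_right e2 (by linarith)
      _ = m * (ε - 1) * (k - 1) + 2 * m * (k - m) * (W * (k - 1)) := by ring
      _ = _ := by rw [hkW]; ring
  have hkk : (0 : ℝ) < k * (k - 1) := mul_pos hk0 (by linarith)
  have goal' : (m * s + P - m) * (k * (k - 1)) ≤ ε / 2 * (k * (k - 1)) := by
    rw [← mul_assoc]
    refine e3.trans ?_
    rcases Nat.eq_zero_or_pos S.card with hz | hz
    · have : m = 0 := by rw [hm, hz]; simp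
      rw [this]; simp; positivity
    have hm1 : 1 ≤ m := by rw [hm]; exact_mod_cast hz
    rcases le_or_gt (ε * (k - 1)) (m - 1) with h | h
    · have : m * (ε * (k - 1) - (m - 1)) ≤ 0 :=
        mul_nonpos_of_nonneg_of_nonpos hm0 (by linarith)
      have : 0 ≤ ε / 2 * (k * (k - 1)) := by positivity
      linarith
    · have hmk2 : m ≤ k / 2 := by nlinarith
      calc m * (ε * (k - 1) - (m - 1)) ≤ m * (ε * (k - 1)) := by
            apply mul_le_mul_of_nonneg_left _ hm0; linarith
        _ ≤ (k / 2) * (ε * (k - 1)) := by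
            apply mul_le_mul_of_nonneg_right hmk2
            apply mul_nonneg h0.le; linarith
        _ = _ := by ring
  exact le_of_mul_le_mul_right goal' hkk

lemma aux_term (k : ℕ) (hk : 3 ≤ k) (ε : ℝ) (h0 : 0 < ε) (σ : Fin k → ℝ)
    (hσ : ∑ i, σ i = k - 1 + ε) (hpos : ∑ i, max (σ i - 1) 0 ≤ ε / 2)
    (C : ℝ) (hC0 : 0 < C)
    (hC : ∀ n : ℕ, 0 < n → (n.divisors.card : ℝ) ≤ C * (n : ℝ) ^ (ε / 4))
    (n : Fin k → ℕ) (hn : ∀ i, 0 < n i) (j : Fin k) (hj : ∀ i, n i ≤ n j) :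
    ∏ i, ((n i).divisors.card : ℝ) / (n i : ℝ) ^ (σ i) ≤
      C * ∏ i, (if i = j then 1 else
        ((n i).divisors.card : ℝ) / (n i : ℝ) ^ (1 + ε / (4 * k))) := by
  have hk3 : (3 : ℝ) ≤ k := by exact_mod_cast hk
  have hx1 : ∀ i, (1 : ℝ) ≤ n i := fun i => by exact_mod_cast hn i
  have hx0 : ∀ i, (0 : ℝ) < n i := fun i => by exact_mod_cast hn i
  set θ : Fin k → ℝ := fun i => ε / (4 * k) + (1 - σ i + max (σ i - 1) 0) with hθ
  have hθ0 : ∀ i, 0 ≤ θ i := by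
    intro i
    have := le_max_left (σ i - 1) 0
    have h2 : 0 ≤ ε / (4 * k) := by positivity
    simp only [hθ]; linarith
  have hθs : ∑ i ∈ univ.erase j, θ i ≤ σ j - ε / 4 := by
    have ht : ∑ i, θ i ≤ ε / 4 + (k - (k - 1 + ε)) + ε / 2 := by
      simp only [hθ, Finset.sum_add_distrib, Finset.sum_sub_distrib, hσ]
      simp only [Finset.sum_const, card_univ, Fintype.card_fin, nsmul_eq_mul, mul_one]
      have : (k : ℝ) * (ε / (4 * k)) = ε / 4 := by field_simp
      rw [this]; linarith
    have hsp := Finset.add_sum_erase univ θ (mem_univ j)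
    have : 1 - σ j ≤ θ j := by
      have h2 : 0 ≤ ε / (4 * k) := by positivity
      have := le_max_right (σ j - 1) 0
      simp only [hθ]; linarith
    linarith
  have hprod : ∏ i ∈ univ.erase j, (n i : ℝ) ^ (θ i) ≤ (n j : ℝ) ^ (σ j - ε / 4) := by
    calc _ ≤ ∏ i ∈ univ.erase j, (n j : ℝ) ^ (θ i) := by
          apply Finset.prod_le_prod
          · intros; positivity
          · intro i _
            exact Real.rpow_le_rpow (hx0 i).le (by exact_mod_cast hj i) (hθ0 i)
      _ = (n j : ℝ) ^ (∑ i ∈ univ.erase j, θ i) := (Real.rpow_sum_of_pos (hx0 j) _ _).symm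
      _ ≤ _ := Real.rpow_le_rpow_of_exponent_le (hx1 j) hθs
  have hpp : 0 < ∏ i ∈ univ.erase j, (n i : ℝ) ^ (θ i) :=
    Finset.prod_pos (fun i _ => Real.rpow_pos_of_pos (hx0 i) _)
  have hjb : ((n j).divisors.card : ℝ) / (n j : ℝ) ^ (σ j) ≤
      C * (∏ i ∈ univ.erase j, (n i : ℝ) ^ (θ i))⁻¹ := by
    calc _ ≤ C * (n j : ℝ) ^ (ε / 4) / (n j : ℝ) ^ (σ j) := by
          apply div_le_div_of_nonneg_right (hC _ (hn j)); positivity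
      _ = C * ((n j : ℝ) ^ (σ j - ε / 4))⁻¹ := by
          rw [Real.rpow_sub (hx0 j)]; field_simp
      _ ≤ _ := by
          apply mul_le_mul_of_nonneg_left _ hC0.le
          exact inv_anti₀ hpp hprod
  rw [← Finset.mul_prod_erase univ _ (mem_univ j),
    ← Finset.mul_prod_erase univ (fun i => if i = j then (1 : ℝ) else _) (mem_univ j)]
  simp only [if_true, one_mul]
  refine (mul_le_mul_of_nonneg_right hjb (Finset.prod_nonneg (by intros; positivity))).trans ?_
  rw [mul_assoc, ← Finset.prod_inv_distrib, ← Finset.prod_mul_distrib]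
  apply mul_le_mul_of_nonneg_left _ hC0.le
  apply Finset.prod_le_prod
  · intros; positivity
  · intro i hi
    rw [if_neg (Finset.ne_of_mem_erase hi)]
    have : ((n i : ℝ) ^ θ i)⁻¹ * (((n i).divisors.card : ℝ) / (n i : ℝ) ^ σ i) =
        ((n i).divisors.card : ℝ) / (n i : ℝ) ^ (θ i + σ i) := by
      rw [Real.rpow_add (hx0 i) (θ i) (σ i), mul_comm, ← div_eq_mul_inv, div_div, mul_comm]
    rw [this]
    apply div_le_div_of_nonneg_left (by positivity) (Real.rpow_pos_of_pos (hx0 i) _)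
    apply Real.rpow_le_rpow_of_exponent_le (hx1 i)
    have := le_max_right (σ i - 1) 0
    simp only [hθ]; linarith

lemma aux_sum_j (k : ℕ) (a : Fin k → ℤ) (ha : ∀ i, a i ≠ 0) (η : ℝ) (hη : 0 < η)
    (T : Finset {n : Fin k → ℕ // (∀ i, 0 < n i) ∧ (∑ i, a i * (n i : ℤ)) = 0}) (j : Fin k) :
    ∑ n ∈ T, ∏ i, (if i = j then 1 else
        ((n.1 i).divisors.card : ℝ) / (n.1 i : ℝ) ^ (1 + η)) ≤ ((1 + 1 / η) ^ 2) ^ k := by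
  classical
  obtain ⟨N, hN⟩ : ∃ N : ℕ, ∀ n ∈ T, ∀ i, n.1 i ≤ N := by
    refine ⟨∑ n ∈ T, ∑ i, n.1 i, fun n hn i => ?_⟩
    exact (Finset.single_le_sum (f := fun i => n.1 i) (fun _ _ => Nat.zero_le _) (mem_univ i)).trans
      (Finset.single_le_sum (f := fun n : {n : Fin k → ℕ // (∀ i, 0 < n i) ∧
        (∑ i, a i * (n i : ℤ)) = 0} => ∑ i, n.1 i) (fun _ _ => Nat.zero_le _) hn)
  set F : Fin k → ℕ → ℝ := fun i m => if i = j then 1 else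
    (m.divisors.card : ℝ) / (m : ℝ) ^ (1 + η) with hF
  have hF0 : ∀ i m, 0 ≤ F i m := by
    intro i m; simp only [hF]; split_ifs <;> positivity
  set t : Fin k → Finset ℕ := fun i => if i = j then {0} else Icc 1 N with ht
  set φ : {n : Fin k → ℕ // (∀ i, 0 < n i) ∧ (∑ i, a i * (n i : ℤ)) = 0} → (Fin k → ℕ) :=
    fun n => Function.update n.1 j 0 with hφ
  have hinj : Set.InjOn φ T := by
    intro n _ n' _ h
    have hoff : ∀ i, i ≠ j → n.1 i = n'.1 i := by
      intro i hi
      have := congrFun h i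
      simpa [hφ, Function.update_of_ne hi] using this
    have hjj : n.1 j = n'.1 j := by
      have h1 := n.2.2
      have h2 := n'.2.2
      rw [← Finset.add_sum_erase univ _ (mem_univ j)] at h1 h2
      have h3 : ∑ i ∈ univ.erase j, a i * (n.1 i : ℤ) = ∑ i ∈ univ.erase j, a i * (n'.1 i : ℤ) :=
        Finset.sum_congr rfl (fun i hi => by rw [hoff i (Finset.ne_of_mem_erase hi)])
      have h4 : a j * (n.1 j : ℤ) = a j * (n'.1 j : ℤ) := by linarith
      exact_mod_cast mul_left_cancel₀ (ha j) h4
    apply Subtype.ext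
    funext i
    by_cases hi : i = j
    · rw [hi]; exact hjj
    · exact hoff i hi
  have hval : ∀ n ∈ T, ∏ i, F i (n.1 i) = ∏ i, F i (φ n i) := by
    intro n _
    apply Finset.prod_congr rfl
    intro i _
    by_cases hi : i = j
    · simp [hF, hi]
    · simp [hφ, Function.update_of_ne hi]
  have hmaps : T.image φ ⊆ Fintype.piFinset t := by
    intro p hp
    obtain ⟨n, hn, rfl⟩ := Finset.mem_image.mp hp
    rw [Fintype.mem_piFinset]
    intro i
    by_cases hi : i = j
    · subst hi; simp [ht, hφ]
    · simp only [ht, hφ, if_neg hi, Function.update_of_ne hi, Finset.mem_Icc]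
      exact ⟨n.2.1 i, hN n hn i⟩
  have hη1 : (1 : ℝ) ≤ (1 + 1 / η) ^ 2 := by
    apply one_le_pow₀
    have : 0 < 1 / η := by positivity
    linarith
  calc _ = ∑ n ∈ T, ∏ i, F i (φ n i) := Finset.sum_congr rfl hval
    _ = ∑ p ∈ T.image φ, ∏ i, F i (p i) := 
        (Finset.sum_image (f := fun p : Fin k → ℕ => ∏ i, F i (p i)) hinj).symm
    _ ≤ ∑ p ∈ Fintype.piFinset t, ∏ i, F i (p i) :=
        Finset.sum_le_sum_of_subset_of_nonneg hmaps
          (fun p _ _ => Finset.prod_nonneg (fun i _ => hF0 i _))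
    _ = ∏ i, ∑ m ∈ t i, F i m := (Finset.prod_univ_sum t F).symm
    _ ≤ ∏ i : Fin k, (1 + 1 / η) ^ 2 := by
        apply Finset.prod_le_prod
        · intro i _; exact Finset.sum_nonneg (fun m _ => hF0 i m)
        · intro i _
          by_cases hi : i = j
          · simpa [ht, hF, hi] using hη1
          · simp only [ht, hF, if_neg hi]
            exact aux_div_sum η hη N
    _ = _ := by simp

theorem divisor_correlation_abs_convergence :
    ∃ A : ℝ, 0 < A ∧ ∀ ε : ℝ, 0 < ε → ε < 1 / 8 → ∃ C : ℝ, 0 < C ∧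
      ∀ k : ℕ, 3 ≤ k → ∀ s : ℝ, ∀ α : Fin k → ℝ, ∀ a : Fin k → ℤ,
        (∀ i, a i ≠ 0) →
        (∀ i, |α i| ≤ 1 / (2 * ((k : ℝ) - 1))) →
        1 - 1 / (k : ℝ) + ε / k - (∑ i, α i) / k ≤ s →
        Summable (fun n : {n : Fin k → ℕ // (∀ i, 0 < n i) ∧
              (∑ i, a i * (n i : ℤ)) = 0} =>
            ∏ i, ((n.1 i).divisors.card : ℝ) / (n.1 i : ℝ) ^ (s + α i)) ∧
          (∑' n : {n : Fin k → ℕ // (∀ i, 0 < n i) ∧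
              (∑ i, a i * (n i : ℤ)) = 0},
            ∏ i, ((n.1 i).divisors.card : ℝ) / (n.1 i : ℝ) ^ (s + α i)) ≤
            C * (A * k / ε) ^ (4 * k) := by
  refine ⟨5, by norm_num, fun ε h0 h1 => ?_⟩
  obtain ⟨C, hC0, hC⟩ := aux_div_bound (ε / 4) (by positivity)
  refine ⟨C, hC0, fun k hk s α a ha hα hs => ?_⟩
  have hk3 : (3 : ℝ) ≤ k := by exact_mod_cast hk
  set s₀ : ℝ := 1 - 1 / (k : ℝ) + ε / k - (∑ i, α i) / k with hs₀
  have hpos := aux_pos k hk ε h0 h1 α hα s₀ hs₀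
  have hσ : ∑ i, (s₀ + α i) = k - 1 + ε := by
    rw [Finset.sum_add_distrib]
    simp only [Finset.sum_const, card_univ, Fintype.card_fin, nsmul_eq_mul]
    rw [hs₀]; field_simp; ring
  have hη : 0 < ε / (4 * k) := by positivity
  have hnn : 0 ≤ (fun n : {n : Fin k → ℕ // (∀ i, 0 < n i) ∧
              (∑ i, a i * (n i : ℤ)) = 0} =>
            ∏ i, ((n.1 i).divisors.card : ℝ) / (n.1 i : ℝ) ^ (s + α i)) := by
    intro n; exact Finset.prod_nonneg (by intros; positivity)
  have hterm : ∀ n : {n : Fin k → ℕ // (∀ i, 0 < n i) ∧ (∑ i, a i * (n i : ℤ)) = 0},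
      ∏ i, ((n.1 i).divisors.card : ℝ) / (n.1 i : ℝ) ^ (s + α i) ≤
      ∑ j, C * ∏ i, (if i = j then 1 else
        ((n.1 i).divisors.card : ℝ) / (n.1 i : ℝ) ^ (1 + ε / (4 * k))) := by
    intro n
    have : Nonempty (Fin k) := ⟨⟨0, by omega⟩⟩
    obtain ⟨j, hj⟩ := Finite.exists_max n.1
    have hA : ∏ i, ((n.1 i).divisors.card : ℝ) / (n.1 i : ℝ) ^ (s + α i) ≤
        ∏ i, ((n.1 i).divisors.card : ℝ) / (n.1 i : ℝ) ^ (s₀ + α i) := by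
      apply Finset.prod_le_prod
      · intros; positivity
      · intro i _
        have hx : (1 : ℝ) ≤ n.1 i := by exact_mod_cast n.2.1 i
        apply div_le_div_of_nonneg_left (by positivity) (Real.rpow_pos_of_pos (by linarith) _)
        exact Real.rpow_le_rpow_of_exponent_le hx (by linarith)
    refine hA.trans ((aux_term k hk ε h0 (fun i => s₀ + α i) hσ hpos C hC0 hC n.1 n.2.1 j hj).trans ?_)
    apply Finset.single_le_sum (f := fun j => C * ∏ i, (if i = j then (1 : ℝ) else
        ((n.1 i).divisors.card : ℝ) / (n.1 i : ℝ) ^ (1 + ε / (4 * k)))) _ (mem_univ j)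
    intro j _
    apply mul_nonneg hC0.le (Finset.prod_nonneg _)
    intro i _
    split_ifs <;> positivity
  have hkε : 1 ≤ (k : ℝ) / ε := by rw [le_div_iff₀ h0]; linarith
  have hbound : ∀ T : Finset {n : Fin k → ℕ // (∀ i, 0 < n i) ∧ (∑ i, a i * (n i : ℤ)) = 0},
      ∑ n ∈ T, ∏ i, ((n.1 i).divisors.card : ℝ) / (n.1 i : ℝ) ^ (s + α i) ≤
        C * (5 * k / ε) ^ (4 * k) := by
    intro T
    have hX : 1 ≤ 5 * k / ε := by rw [mul_div_assoc]; linarith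
    calc _ ≤ ∑ n ∈ T, ∑ j, C * ∏ i, (if i = j then 1 else
            ((n.1 i).divisors.card : ℝ) / (n.1 i : ℝ) ^ (1 + ε / (4 * k))) :=
          Finset.sum_le_sum (fun n _ => hterm n)
      _ = ∑ j, C * ∑ n ∈ T, ∏ i, (if i = j then 1 else
            ((n.1 i).divisors.card : ℝ) / (n.1 i : ℝ) ^ (1 + ε / (4 * k))) := by
          rw [Finset.sum_comm]
          simp only [Finset.mul_sum]
      _ ≤ ∑ j : Fin k, C * ((1 + 1 / (ε / (4 * k))) ^ 2) ^ k := by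
          apply Finset.sum_le_sum
          intro j _
          exact mul_le_mul_of_nonneg_left (aux_sum_j k a ha _ hη T j) hC0.le
      _ = C * (k * (1 + 4 * (k / ε)) ^ (2 * k)) := by
          simp only [Finset.sum_const, card_univ, Fintype.card_fin, nsmul_eq_mul]
          rw [← pow_mul, one_div_div, mul_div_assoc]; ring
      _ ≤ C * ((5 * k / ε) ^ (2 * k) * (5 * k / ε) ^ (2 * k)) := by
          apply mul_le_mul_of_nonneg_left _ hC0.le
          apply mul_le_mul _ _ (by positivity) (by positivity)
          · calc (k : ℝ) ≤ 5 * k / ε := by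
                  rw [le_div_iff₀ h0]; nlinarith
              _ ≤ _ := le_self_pow₀ hX (by omega)
          · apply pow_le_pow_left₀ (by positivity)
            rw [mul_div_assoc]; linarith
      _ = _ := by rw [← pow_add]; congr 2; ring
  exact ⟨summable_of_sum_le hnn hbound, Real.tsum_le_of_sum_le hnn hbound⟩
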